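/- (Stopping-time construction produces a sparse family with L^∞ control.) Let f be locally integrable on a dyadic cube Q₀, and define recursively 𝒮 starting from {Q₀}: ch_𝒮(S) consists of the maximal dyadic S' ⊊ S with ⟨‖f‖_E⟩_{S'} > 2⟨‖f‖_E⟩_S. Then: (1) ∑_{S'∈ch_𝒮(S)}|S'| ≤ |S|/2, so 𝒮 is sparse; (2) for f_S := f·1_{E_𝒮(S)} + ∑_{S'∈ch_𝒮(S)} ⟨f⟩_{S'}1_{S'} one has ∫_Q f = ∫_Q f_S whenever π_𝒮(Q) = S; and (3) ‖f_S‖_{L^∞(E)} ≤ 2·2^d ⟨‖f‖_E⟩_S. -/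

import Mathlib

/-!
Dyadic cubes are nested or disjoint, so the maximal cubes at which the average of `‖f‖` exceeds
twice its value on `S` are disjoint, and Chebyshev's inequality bounds their total measure by
`|S| / 2`. A cube lying in no stopping child has average at most `2 ⟨‖f‖⟩_S`. The dyadic parent of
a stopping child is such a cube, which costs the factor `2^d`, and so is every small cube around a
point of `S` outside the stopping children, where the bound follows by Lebesgue differentiation.
A cube with stopping parent `S` contains each stopping child of `S` that it meets, so replacing `f`
by its averages on the children does not change its integral.
-/

open MeasureTheory
open scoped ENNReal

noncomputable section

/-- A dyadic cube in `ℝ^d`: generation `k` and lower-left corner `2^{-k} m`. -/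
structure DyadicCube (d : ℕ) where
  k : ℤ
  m : Fin d → ℤ

namespace DyadicCube

variable {d : ℕ}

/-- The underlying set `∏ᵢ [2^{-k} mᵢ, 2^{-k}(mᵢ+1))`. -/
def set (Q : DyadicCube d) : Set (Fin d → ℝ) :=
  {x | ∀ i, (Q.m i : ℝ) * (2:ℝ)^(-Q.k) ≤ x i ∧ x i < ((Q.m i : ℝ) + 1) * (2:ℝ)^(-Q.k)}

/-- Side length `ℓ(Q) = 2^{-k}`. -/
def len (Q : DyadicCube d) : ℝ := (2:ℝ)^(-Q.k)

instance : Countable (DyadicCube d) :=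
  Function.Injective.countable (f := fun Q : DyadicCube d => (Q.k, Q.m))
    (fun Q Q' h => by cases Q; cases Q'; simpa using h)

/-- The dyadic child of `Q` selected by `e ∈ {0,1}^d`. -/
def child (Q : DyadicCube d) (e : Fin d → Bool) : DyadicCube d :=
  ⟨Q.k + 1, fun i => 2 * Q.m i + (if e i then 1 else 0)⟩

end DyadicCube

variable {d : ℕ} {E : Type*} [NormedAddCommGroup E] [NormedSpace ℝ E] [CompleteSpace E]

/-- Average `⟨f⟩_Q = μ(Q)⁻¹ ∫_Q f dμ`. -/
def cubeAvg (μ : Measure (Fin d → ℝ)) (f : (Fin d → ℝ) → E) (Q : DyadicCube d) : E :=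
  (μ Q.set).toReal⁻¹ • ∫ x in Q.set, f x ∂μ

/-- Martingale (Haar) difference `D_Q f = ∑_{Q'∈child(Q)} ⟨f⟩_{Q'} 1_{Q'} − ⟨f⟩_Q 1_Q`. -/
def haarDiff (μ : Measure (Fin d → ℝ)) (f : (Fin d → ℝ) → E) (Q : DyadicCube d) :
    (Fin d → ℝ) → E := fun x =>
  (∑ e : Fin d → Bool, (Q.child e).set.indicator (fun _ => cubeAvg μ f (Q.child e)) x)
    - Q.set.indicator (fun _ => cubeAvg μ f Q) x

/-- `ch_𝒮(S)`: the maximal elements of `𝒮` strictly contained in `S`. -/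
def chColl (𝒮 : Set (DyadicCube d)) (S : DyadicCube d) : Set (DyadicCube d) :=
  {S' | S' ∈ 𝒮 ∧ S'.set ⊂ S.set ∧
    ∀ S'' ∈ 𝒮, S''.set ⊂ S.set → S'.set ⊆ S''.set → S''.set = S'.set}

/-- `E_𝒮(S) = S ∖ ⋃ ch_𝒮(S)`. -/
def ESet (𝒮 : Set (DyadicCube d)) (S : DyadicCube d) : Set (Fin d → ℝ) :=
  S.set \ ⋃ S' ∈ chColl 𝒮 S, DyadicCube.set S'

/-- `𝒮` is sparse: `μ(E_𝒮(S)) ≥ μ(S)/2` for all `S ∈ 𝒮`. -/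
def IsSparse (μ : Measure (Fin d → ℝ)) (𝒮 : Set (DyadicCube d)) : Prop :=
  ∀ S ∈ 𝒮, μ S.set ≤ 2 * μ (ESet 𝒮 S)

/-- `π_𝒮(Q) = S`: `S` is the minimal element of `𝒮` containing `Q`. -/
def isStopParent (𝒮 : Set (DyadicCube d)) (Q S : DyadicCube d) : Prop :=
  S ∈ 𝒮 ∧ Q.set ⊆ S.set ∧ ∀ S' ∈ 𝒮, Q.set ⊆ S'.set → S.set ⊆ S'.set

/-- `P_S f = ∑_{Q : π_𝒮(Q) = S} D_Q f`. -/
def PS (μ : Measure (Fin d → ℝ)) (𝒮 : Set (DyadicCube d)) (S : DyadicCube d)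
    (f : (Fin d → ℝ) → E) : (Fin d → ℝ) → E := fun x =>
  ∑' Q : {Q : DyadicCube d // isStopParent 𝒮 Q S}, haarDiff μ f Q.1 x

/-- ENNReal average of the norm, `⟨‖f‖⟩_S^μ`. -/
def cubeAvgN (μ : Measure (Fin d → ℝ)) (f : (Fin d → ℝ) → E) (Q : DyadicCube d) : ℝ≥0∞ :=
  (μ Q.set)⁻¹ * ∫⁻ x in Q.set, ‖f x‖₊ ∂μ

end

noncomputable section

open MeasureTheory
open scoped ENNReal

variable {d : ℕ} {E : Type*} [NormedAddCommGroup E] [NormedSpace ℝ E] [CompleteSpace E]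

/-- The stopping children of `S` for `f`: maximal dyadic `S' ⊊ S` with
`⟨‖f‖⟩_{S'} > 2⟨‖f‖⟩_S` (Lebesgue measure). -/
def stopChildren (f : (Fin d → ℝ) → E) (S : DyadicCube d) : Set (DyadicCube d) :=
  {S' | S'.set ⊂ S.set ∧ cubeAvgN volume f S' > 2 * cubeAvgN volume f S ∧
    ∀ S'' : DyadicCube d, S''.set ⊂ S.set →
      cubeAvgN volume f S'' > 2 * cubeAvgN volume f S →
      S'.set ⊆ S''.set → S''.set = S'.set}

/-- The stopping family generated from `Q₀`, level by level. -/
def stopFamilyLevel (f : (Fin d → ℝ) → E) (Q₀ : DyadicCube d) : ℕ → Set (DyadicCube d)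
  | 0 => {Q₀}
  | n + 1 => ⋃ S ∈ stopFamilyLevel f Q₀ n, stopChildren f S

/-- The full stopping family `𝒮 = ⋃ₙ 𝒮ₙ`. -/
def stopFamily (f : (Fin d → ℝ) → E) (Q₀ : DyadicCube d) : Set (DyadicCube d) :=
  ⋃ n, stopFamilyLevel f Q₀ n

open Filter Topology

section AverageOnPieces

variable {α ι : Type*} [MeasurableSpace α] {μ : Measure α}

theorem setIntegral_eq_of_eqOn_setAverage {s : Set α} {f g : α → E} (hs : MeasurableSet s)
    (hμs : μ s ≠ ∞) (hg : Set.EqOn g (fun _ => ⨍ y in s, f y ∂μ) s) :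
    ∫ x in s, g x ∂μ = ∫ x in s, f x ∂μ := by
  rw [setIntegral_congr_fun hs hg, setIntegral_const, measure_smul_setAverage f hμs]

theorem setIntegral_norm_le_of_eqOn_setAverage {F : Type*} [NormedAddCommGroup F]
    [NormedSpace ℝ F] {s : Set α} {f g : α → F} (hs : MeasurableSet s) (hμs : μ s ≠ ∞)
    (hg : Set.EqOn g (fun _ => ⨍ y in s, f y ∂μ) s) :
    ∫ x in s, ‖g x‖ ∂μ ≤ ∫ x in s, ‖f x‖ ∂μ :=
  calc ∫ x in s, ‖g x‖ ∂μ = ∫ _ in s, ‖⨍ y in s, f y ∂μ‖ ∂μ :=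
        setIntegral_congr_fun hs fun _ hx => congrArg norm (hg hx)
    _ = ‖μ.real s • ⨍ y in s, f y ∂μ‖ := by
        rw [setIntegral_const, norm_smul, Real.norm_of_nonneg measureReal_nonneg, smul_eq_mul]
    _ = ‖∫ x in s, f x ∂μ‖ := by rw [measure_smul_setAverage f hμs]
    _ ≤ ∫ x in s, ‖f x‖ ∂μ := norm_integral_le_integral_norm f

variable [Countable ι] {s : ι → Set α}

theorem integrableOn_iUnion_of_eqOn_setAverage {F : Type*} [NormedAddCommGroup F]
    [NormedSpace ℝ F] {f g : α → F} (hs : ∀ i, MeasurableSet (s i))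
    (hdisj : Pairwise (Function.onFun Disjoint s)) (hμs : ∀ i, μ (s i) ≠ ∞)
    (hf : IntegrableOn f (⋃ i, s i) μ)
    (hg : ∀ i, Set.EqOn g (fun _ => ⨍ y in s i, f y ∂μ) (s i)) :
    IntegrableOn g (⋃ i, s i) μ := by
  refine integrableOn_iUnion_of_summable_integral_norm
    (fun i => (integrableOn_const (hμs i)).congr_fun (hg i).symm (hs i)) ?_
  exact (hasSum_integral_iUnion hs hdisj hf.norm).summable.of_nonneg_of_le
    (fun i => integral_nonneg fun _ => norm_nonneg _)
    fun i => setIntegral_norm_le_of_eqOn_setAverage (hs i) (hμs i) (hg i)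

theorem setIntegral_iUnion_eq_of_eqOn_setAverage {f g : α → E} (hs : ∀ i, MeasurableSet (s i))
    (hdisj : Pairwise (Function.onFun Disjoint s)) (hμs : ∀ i, μ (s i) ≠ ∞)
    (hf : IntegrableOn f (⋃ i, s i) μ)
    (hg : ∀ i, Set.EqOn g (fun _ => ⨍ y in s i, f y ∂μ) (s i)) :
    ∫ x in ⋃ i, s i, g x ∂μ = ∫ x in ⋃ i, s i, f x ∂μ := by
  rw [integral_iUnion hs hdisj (integrableOn_iUnion_of_eqOn_setAverage hs hdisj hμs hf hg),
    integral_iUnion hs hdisj hf]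
  exact tsum_congr fun i => setIntegral_eq_of_eqOn_setAverage (hs i) (hμs i) (hg i)

end AverageOnPieces

theorem measure_le_two_mul_measure_sdiff {α : Type*} [MeasurableSpace α] {μ : Measure α}
    {s t : Set α} (hs : μ s ≠ ∞) (ht : μ t ≤ μ s / 2) : μ s ≤ 2 * μ (s \ t) :=
  calc μ s = 2 * (μ s - μ s / 2) := by
        rw [ENNReal.sub_half hs, ENNReal.mul_div_cancel two_ne_zero ENNReal.ofNat_ne_top]
    _ ≤ 2 * μ (s \ t) := by
        gcongr
        exact (tsub_le_tsub_left ht _).trans le_measure_sdiff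

theorem floor_mul_two_zpow (x : ℝ) (k : ℤ) (n : ℕ) :
    ⌊x * (2 : ℝ) ^ k⌋ = ⌊x * (2 : ℝ) ^ (k + n)⌋ / (2 ^ n : ℕ) := by
  rw [← Int.floor_div_natCast, zpow_add₀ two_ne_zero, zpow_natCast]
  push_cast
  rw [← mul_assoc, mul_div_cancel_right₀ _ (by positivity)]

namespace DyadicCube

theorem set_eq_pi (Q : DyadicCube d) :
    Q.set = Set.univ.pi fun i => Set.Ico (Q.m i * Q.len) ((Q.m i + 1) * Q.len) := by
  ext x
  simp [set, len]

theorem len_pos (Q : DyadicCube d) : 0 < Q.len :=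
  zpow_pos two_pos _

theorem measurableSet_set (Q : DyadicCube d) : MeasurableSet Q.set := by
  rw [set_eq_pi]
  exact MeasurableSet.univ_pi fun _ => measurableSet_Ico

theorem volume_set (Q : DyadicCube d) : volume Q.set = ENNReal.ofReal Q.len ^ d := by
  simp [set_eq_pi, Real.volume_pi_Ico, add_mul]

theorem volume_set_ne_zero (Q : DyadicCube d) : volume Q.set ≠ 0 := by
  rw [volume_set]
  exact pow_ne_zero _ (ENNReal.ofReal_pos.2 Q.len_pos).ne'

theorem volume_set_ne_top (Q : DyadicCube d) : volume Q.set ≠ ∞ := by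
  rw [volume_set]
  exact ENNReal.pow_ne_top ENNReal.ofReal_ne_top

theorem nonempty_set (Q : DyadicCube d) : Q.set.Nonempty :=
  nonempty_of_measure_ne_zero Q.volume_set_ne_zero

/-- The midpoint of a dyadic cube, which is a ball around it in the sup norm of `Fin d → ℝ`,
up to boundary. -/
def center (Q : DyadicCube d) : Fin d → ℝ :=
  fun i => (Q.m i + 1 / 2) * Q.len

theorem closedBall_center (Q : DyadicCube d) :
    Metric.closedBall Q.center (Q.len / 2) =
      Set.Icc (fun i => Q.m i * Q.len) (fun i => (Q.m i + 1) * Q.len) := by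
  rw [← Set.pi_univ_Icc, closedBall_pi _ (half_pos Q.len_pos).le]
  refine Set.pi_congr rfl fun i _ => ?_
  rw [Real.Icc_eq_closedBall, center]
  congr 1 <;> ring

theorem set_subset_closedBall (Q : DyadicCube d) :
    Q.set ⊆ Metric.closedBall Q.center (Q.len / 2) := by
  rw [closedBall_center, set_eq_pi, ← Set.pi_univ_Icc]
  exact Set.pi_mono fun _ _ => Set.Ico_subset_Icc_self

theorem set_ae_eq_closedBall (Q : DyadicCube d) :
    Q.set =ᵐ[volume] Metric.closedBall Q.center (Q.len / 2) := by
  rw [closedBall_center, set_eq_pi]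
  exact Measure.univ_pi_Ico_ae_eq_Icc

theorem mem_set_iff_floor {Q : DyadicCube d} {x : Fin d → ℝ} :
    x ∈ Q.set ↔ ∀ i, ⌊x i * (2 : ℝ) ^ Q.k⌋ = Q.m i := by
  refine forall_congr' fun i => ?_
  rw [Int.floor_eq_iff, zpow_neg, ← div_eq_mul_inv, ← div_eq_mul_inv,
    div_le_iff₀ (by positivity), lt_div_iff₀ (by positivity)]

theorem set_subset_of_mem {Q R : DyadicCube d} {x : Fin d → ℝ} (hk : Q.k ≤ R.k)
    (hQ : x ∈ Q.set) (hR : x ∈ R.set) : R.set ⊆ Q.set := by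
  obtain ⟨n, hn⟩ := Int.le.dest hk
  intro y hy
  rw [mem_set_iff_floor] at hQ hR hy ⊢
  intro i
  rw [← hQ i, floor_mul_two_zpow, floor_mul_two_zpow (x i) Q.k n, hn, hy i, hR i]

theorem subset_or_subset_of_mem {Q R : DyadicCube d} {x : Fin d → ℝ}
    (hQ : x ∈ Q.set) (hR : x ∈ R.set) : Q.set ⊆ R.set ∨ R.set ⊆ Q.set :=
  (le_total R.k Q.k).imp (set_subset_of_mem · hR hQ) (set_subset_of_mem · hQ hR)

theorem set_eq_of_subset_of_k_le {Q R : DyadicCube d} (h : Q.set ⊆ R.set) (hk : Q.k ≤ R.k) :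
    Q.set = R.set :=
  have ⟨_, hx⟩ := Q.nonempty_set
  h.antisymm (set_subset_of_mem hk hx (h hx))

theorem dim_ne_zero_of_ssubset {Q R : DyadicCube d} (h : Q.set ⊂ R.set) : d ≠ 0 := by
  rintro rfl
  exact h.ne (Q.nonempty_set.eq_univ.trans R.nonempty_set.eq_univ.symm)

theorem k_le_of_subset (hd : d ≠ 0) {Q R : DyadicCube d} (h : Q.set ⊆ R.set) : R.k ≤ Q.k := by
  have hvol := measure_mono (μ := volume) h
  rw [volume_set, volume_set, ENNReal.pow_le_pow_left_iff hd,
    ENNReal.ofReal_le_ofReal_iff R.len_pos.le, len, len,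
    zpow_le_zpow_iff_right₀ one_lt_two] at hvol
  exact neg_le_neg_iff.1 hvol

theorem k_lt_of_ssubset {Q R : DyadicCube d} (h : Q.set ⊂ R.set) : R.k < Q.k :=
  lt_of_not_ge fun hk => h.ne (set_eq_of_subset_of_k_le h.subset hk)

theorem set_injective (hd : d ≠ 0) : Function.Injective (set : DyadicCube d → Set (Fin d → ℝ)) := by
  rintro ⟨k, m⟩ ⟨l, n⟩ h
  obtain rfl : k = l := le_antisymm (k_le_of_subset hd h.ge) (k_le_of_subset hd h.le)
  obtain ⟨x, hx⟩ := nonempty_set ⟨k, m⟩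
  obtain rfl : m = n :=
    funext fun i => (mem_set_iff_floor.1 hx i).symm.trans (mem_set_iff_floor.1 (h ▸ hx) i)
  rfl

/-- The dyadic cube of generation `k` containing the point `x`. -/
def containing (k : ℤ) (x : Fin d → ℝ) : DyadicCube d :=
  ⟨k, fun i => ⌊x i * (2 : ℝ) ^ k⌋⟩

theorem mem_containing (k : ℤ) (x : Fin d → ℝ) : x ∈ (containing k x).set :=
  mem_set_iff_floor.2 fun _ => rfl

theorem containing_subset {Q : DyadicCube d} {x : Fin d → ℝ} {k : ℤ} (hk : Q.k ≤ k)
    (hx : x ∈ Q.set) : (containing k x).set ⊆ Q.set :=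
  set_subset_of_mem hk hx (mem_containing k x)

theorem tendsto_len_containing (x : Fin d → ℝ) :
    Tendsto (fun k => (containing k x).len) atTop (𝓝 0) := by
  rw [← Nat.map_cast_int_atTop, tendsto_map'_iff]
  simpa [Function.comp_def, containing, len] using
    tendsto_pow_atTop_nhds_zero_of_lt_one (r := (2⁻¹ : ℝ)) (by norm_num) (by norm_num)

/-- The dyadic parent `Q̂` of `Q`; the floor division by `2` inverts the formula for `child`. -/
def parent (Q : DyadicCube d) : DyadicCube d :=
  ⟨Q.k - 1, fun i => Q.m i / 2⟩

theorem set_subset_parent (Q : DyadicCube d) : Q.set ⊆ Q.parent.set := by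
  intro x hx
  rw [mem_set_iff_floor] at hx ⊢
  intro i
  simpa [parent, hx i] using floor_mul_two_zpow (x i) (Q.k - 1) 1

theorem parent_subset_of_ssubset {Q R : DyadicCube d} (h : Q.set ⊂ R.set) :
    Q.parent.set ⊆ R.set :=
  have ⟨_, hx⟩ := Q.nonempty_set
  set_subset_of_mem (Int.le_sub_one_of_lt (k_lt_of_ssubset h)) (h.subset hx)
    (Q.set_subset_parent hx)

theorem not_parent_subset (hd : d ≠ 0) (Q : DyadicCube d) : ¬Q.parent.set ⊆ Q.set :=
  fun h => (sub_one_lt Q.k).not_ge (k_le_of_subset hd h)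

theorem volume_parent (Q : DyadicCube d) : volume Q.parent.set = 2 ^ d * volume Q.set := by
  have hlen : Q.parent.len = 2 * Q.len := by
    rw [len, len, parent, neg_sub, sub_eq_add_neg, zpow_one_add₀ two_ne_zero]
  rw [volume_set, volume_set, hlen, ENNReal.ofReal_mul zero_le_two, mul_pow, ENNReal.ofReal_ofNat]

theorem exists_maximalFor_superset {P : DyadicCube d → Prop} {Q : DyadicCube d} {k : ℤ}
    (hk : ∀ R, P R → k ≤ R.k) (hQ : P Q) : ∃ R, MaximalFor P set R ∧ Q.set ⊆ R.set := by
  obtain ⟨_, ⟨R, ⟨hR, hQR⟩, rfl⟩, hmin⟩ := Int.exists_least_of_bdd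
    (P := fun z => ∃ R, (P R ∧ Q.set ⊆ R.set) ∧ R.k = z)
    ⟨k, fun _ ⟨R, hR, hRk⟩ => hRk ▸ hk R hR.1⟩ ⟨Q.k, Q, ⟨hQ, subset_rfl⟩, rfl⟩
  exact ⟨R, ⟨hR, fun T hT hRT =>
    (set_eq_of_subset_of_k_le hRT (hmin _ ⟨T, ⟨hT, hQR.trans hRT⟩, rfl⟩)).ge⟩, hQR⟩

theorem set_eq_of_maximalFor {P : DyadicCube d → Prop} {Q R : DyadicCube d} {x : Fin d → ℝ}
    (hQ : MaximalFor P set Q) (hR : MaximalFor P set R) (hxQ : x ∈ Q.set) (hxR : x ∈ R.set) :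
    Q.set = R.set :=
  (subset_or_subset_of_mem hxQ hxR).elim (fun h => h.antisymm (hQ.2 hR.1 h))
    fun h => (hR.2 hQ.1 h).antisymm h

end DyadicCube

section Averages

variable {F : Type*} [NormedAddCommGroup F]

theorem integrableOn_dyadicCube {f : (Fin d → ℝ) → F} (hf : LocallyIntegrable f volume)
    (Q : DyadicCube d) : IntegrableOn f Q.set volume :=
  (hf.integrableOn_isCompact (isCompact_closedBall _ _)).mono_set Q.set_subset_closedBall

theorem cubeAvg_eq_setAverage [NormedSpace ℝ F] (μ : Measure (Fin d → ℝ)) (f : (Fin d → ℝ) → F)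
    (Q : DyadicCube d) : cubeAvg μ f Q = ⨍ x in Q.set, f x ∂μ := by
  rw [cubeAvg, setAverage_eq, measureReal_def]

theorem cubeAvgN_eq_setLAverage (μ : Measure (Fin d → ℝ)) (f : (Fin d → ℝ) → F)
    (Q : DyadicCube d) : cubeAvgN μ f Q = ⨍⁻ x in Q.set, ‖f x‖ₑ ∂μ := by
  rw [setLAverage_eq, ENNReal.div_eq_inv_mul]
  rfl

theorem volume_mul_cubeAvgN (f : (Fin d → ℝ) → F) (Q : DyadicCube d) :
    volume Q.set * cubeAvgN volume f Q = ∫⁻ x in Q.set, ‖f x‖ₑ := by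
  rw [cubeAvgN_eq_setLAverage, measure_mul_setLAverage _ Q.volume_set_ne_top]

theorem cubeAvgN_congr {μ : Measure (Fin d → ℝ)} (f : (Fin d → ℝ) → F) {Q R : DyadicCube d}
    (h : Q.set = R.set) : cubeAvgN μ f Q = cubeAvgN μ f R := by
  rw [cubeAvgN, cubeAvgN, h]

theorem enorm_cubeAvg_le_cubeAvgN [NormedSpace ℝ F] (μ : Measure (Fin d → ℝ))
    (f : (Fin d → ℝ) → F) (Q : DyadicCube d) : ‖cubeAvg μ f Q‖ₑ ≤ cubeAvgN μ f Q := by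
  rw [cubeAvg, cubeAvgN, enorm_smul, ← ENNReal.toReal_inv,
    Real.enorm_of_nonneg ENNReal.toReal_nonneg]
  exact mul_le_mul' ENNReal.ofReal_toReal_le (enorm_integral_le_lintegral_enorm f)

theorem cubeAvgN_le_parent (f : (Fin d → ℝ) → F) (Q : DyadicCube d) :
    cubeAvgN volume f Q ≤ 2 ^ d * cubeAvgN volume f Q.parent := by
  refine (ENNReal.mul_le_mul_iff_right Q.volume_set_ne_zero Q.volume_set_ne_top).1 ?_
  calc volume Q.set * cubeAvgN volume f Q = ∫⁻ x in Q.set, ‖f x‖ₑ := volume_mul_cubeAvgN f Q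
    _ ≤ ∫⁻ x in Q.parent.set, ‖f x‖ₑ := lintegral_mono_set Q.set_subset_parent
    _ = volume Q.set * (2 ^ d * cubeAvgN volume f Q.parent) := by
        rw [← volume_mul_cubeAvgN, Q.volume_parent, mul_left_comm, mul_assoc]

theorem ae_tendsto_cubeAvg_containing {f : (Fin d → ℝ) → E} (hf : LocallyIntegrable f volume) :
    ∀ᵐ x, Tendsto (fun k => cubeAvg volume f (.containing k x)) atTop (𝓝 (f x)) := by
  filter_upwards [IsUnifLocDoublingMeasure.ae_tendsto_average volume hf 1] with x hx
  have hball (k : ℤ) : cubeAvg volume f (.containing k x) =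
      ⨍ y in Metric.closedBall (DyadicCube.containing k x).center
        ((DyadicCube.containing k x).len / 2), f y := by
    rw [cubeAvg_eq_setAverage, setAverage_congr (DyadicCube.set_ae_eq_closedBall _)]
  simp only [hball]
  refine hx _ _ (tendsto_nhdsWithin_iff.2 ⟨?_, .of_forall fun k => ?_⟩) (.of_forall fun k => ?_)
  · simpa using (DyadicCube.tendsto_len_containing x).div_const 2
  · exact half_pos (DyadicCube.len_pos _)
  · rw [one_mul]
    exact DyadicCube.set_subset_closedBall _ (DyadicCube.mem_containing k x)

theorem ae_tendsto_cubeAvg_containing_of_integrableOn {f : (Fin d → ℝ) → E} {S : DyadicCube d}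
    (hf : IntegrableOn f S.set) :
    ∀ᵐ x, x ∈ S.set →
      Tendsto (fun k => cubeAvg volume f (.containing k x)) atTop (𝓝 (f x)) := by
  have hloc := ((integrable_indicator_iff S.measurableSet_set).2 hf).locallyIntegrable
  filter_upwards [ae_tendsto_cubeAvg_containing hloc] with x hx hxS
  rw [Set.indicator_of_mem hxS] at hx
  refine hx.congr' <| (eventually_ge_atTop S.k).mono fun k hk => ?_
  simp only [cubeAvg]
  rw [setIntegral_congr_fun (DyadicCube.measurableSet_set _)
    (Set.eqOn_indicator.mono (DyadicCube.containing_subset hk hxS))]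

end Averages

section StoppingChildren

variable {F : Type*} [NormedAddCommGroup F] {f : (Fin d → ℝ) → F} {Q S : DyadicCube d}

theorem mem_stopChildren_iff : Q ∈ stopChildren f S ↔ MaximalFor
    (fun R => R.set ⊂ S.set ∧ 2 * cubeAvgN volume f S < cubeAvgN volume f R) DyadicCube.set Q :=
  ⟨fun h => ⟨⟨h.1, h.2.1⟩, fun R hR hQR => (h.2.2 R hR.1 hR.2 hQR).le⟩,
    fun h => ⟨h.1.1, h.1.2, fun _ hRS hR hQR => (h.2 ⟨hRS, hR⟩ hQR).antisymm hQR⟩⟩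

theorem exists_stopChildren_superset (hQS : Q.set ⊂ S.set)
    (hQ : 2 * cubeAvgN volume f S < cubeAvgN volume f Q) :
    ∃ R ∈ stopChildren f S, Q.set ⊆ R.set := by
  simp only [mem_stopChildren_iff]
  exact DyadicCube.exists_maximalFor_superset (fun R hR => (DyadicCube.k_lt_of_ssubset hR.1).le)
    ⟨hQS, hQ⟩

theorem pairwiseDisjoint_stopChildren (f : (Fin d → ℝ) → F) (S : DyadicCube d) :
    (stopChildren f S).PairwiseDisjoint DyadicCube.set :=
  Set.pairwiseDisjoint_iff.2 fun _ hQ _ hR ⟨_, hxQ, hxR⟩ =>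
    DyadicCube.set_injective (DyadicCube.dim_ne_zero_of_ssubset hQ.1) <|
      DyadicCube.set_eq_of_maximalFor (mem_stopChildren_iff.1 hQ) (mem_stopChildren_iff.1 hR)
        hxQ hxR

theorem biUnion_stopChildren_subset (f : (Fin d → ℝ) → F) (S : DyadicCube d) :
    ⋃ S' ∈ stopChildren f S, DyadicCube.set S' ⊆ S.set :=
  Set.iUnion₂_subset fun _ hS' => hS'.1.subset

theorem cubeAvgN_le_of_not_subset_stopChildren (hQS : Q.set ⊆ S.set)
    (hQ : ∀ S' ∈ stopChildren f S, ¬Q.set ⊆ S'.set) :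
    cubeAvgN volume f Q ≤ 2 * cubeAvgN volume f S := by
  rcases hQS.eq_or_ssubset with heq | hss
  · rw [cubeAvgN_congr f heq]
    exact le_mul_of_one_le_left zero_le one_le_two
  · by_contra! hlt
    obtain ⟨R, hR, hQR⟩ := exists_stopChildren_superset hss hlt
    exact hQ R hR hQR

theorem not_parent_subset_stopChildren {R : DyadicCube d} (hQ : Q ∈ stopChildren f S)
    (hR : R ∈ stopChildren f S) : ¬Q.parent.set ⊆ R.set := by
  intro hQR
  obtain ⟨x, hx⟩ := Q.nonempty_set
  obtain rfl := (pairwiseDisjoint_stopChildren f S).elim_set hQ hR x hx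
    (hQR (Q.set_subset_parent hx))
  exact Q.not_parent_subset (DyadicCube.dim_ne_zero_of_ssubset hQ.1) hQR

theorem cubeAvgN_stopChildren_le (hQ : Q ∈ stopChildren f S) :
    cubeAvgN volume f Q ≤ 2 * 2 ^ d * cubeAvgN volume f S :=
  calc cubeAvgN volume f Q ≤ 2 ^ d * cubeAvgN volume f Q.parent := cubeAvgN_le_parent f Q
    _ ≤ 2 ^ d * (2 * cubeAvgN volume f S) := by
        gcongr
        exact cubeAvgN_le_of_not_subset_stopChildren (DyadicCube.parent_subset_of_ssubset hQ.1)
          fun _ hR => not_parent_subset_stopChildren hQ hR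
    _ = 2 * 2 ^ d * cubeAvgN volume f S := by ring

theorem cubeAvgN_ne_zero_of_mem_stopChildren (hQ : Q ∈ stopChildren f S) :
    cubeAvgN volume f S ≠ 0 := by
  intro h0
  have hle := cubeAvgN_stopChildren_le hQ
  rw [h0, mul_zero] at hle
  exact not_lt_zero (hQ.2.1.trans_le hle)

theorem cubeAvgN_ne_top_of_mem_stopChildren (hQ : Q ∈ stopChildren f S) :
    cubeAvgN volume f S ≠ ∞ :=
  (ENNReal.lt_top_of_mul_ne_top_right hQ.2.1.ne_top two_ne_zero).ne

theorem mul_tsum_volume_stopChildren_le (f : (Fin d → ℝ) → F) (S : DyadicCube d) :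
    2 * cubeAvgN volume f S * ∑' S' : stopChildren f S, volume S'.1.set ≤
      ∫⁻ x in S.set, ‖f x‖ₑ :=
  calc 2 * cubeAvgN volume f S * ∑' S' : stopChildren f S, volume S'.1.set
      = ∑' S' : stopChildren f S, 2 * cubeAvgN volume f S * volume S'.1.set :=
        ENNReal.tsum_mul_left.symm
    _ ≤ ∑' S' : stopChildren f S, ∫⁻ x in S'.1.set, ‖f x‖ₑ := by
        refine ENNReal.tsum_le_tsum fun S' => ?_
        rw [← volume_mul_cubeAvgN, mul_comm]
        gcongr
        exact S'.2.2.1.le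
    _ = ∫⁻ x in ⋃ S' ∈ stopChildren f S, S'.set, ‖f x‖ₑ :=
        (lintegral_biUnion (Set.to_countable _) (fun S' _ => S'.measurableSet_set)
          (pairwiseDisjoint_stopChildren f S) _).symm
    _ ≤ ∫⁻ x in S.set, ‖f x‖ₑ := lintegral_mono_set (biUnion_stopChildren_subset f S)

theorem tsum_volume_stopChildren_le (f : (Fin d → ℝ) → F) (S : DyadicCube d) :
    ∑' S' : stopChildren f S, volume S'.1.set ≤ volume S.set / 2 := by
  rcases isEmpty_or_nonempty (stopChildren f S) with _ | ⟨⟨Q, hQ⟩⟩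
  · simp
  · refine (ENNReal.mul_le_mul_iff_right
      (mul_ne_zero two_ne_zero (cubeAvgN_ne_zero_of_mem_stopChildren hQ))
      (ENNReal.mul_ne_top ENNReal.ofNat_ne_top (cubeAvgN_ne_top_of_mem_stopChildren hQ))).1 ?_
    calc 2 * cubeAvgN volume f S * ∑' S' : stopChildren f S, volume S'.1.set
        ≤ ∫⁻ x in S.set, ‖f x‖ₑ := mul_tsum_volume_stopChildren_le f S
      _ = 2 * cubeAvgN volume f S * (volume S.set / 2) := by
          rw [← volume_mul_cubeAvgN, mul_comm 2, mul_assoc,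
            ENNReal.mul_div_cancel two_ne_zero ENNReal.ofNat_ne_top, mul_comm]

end StoppingChildren

section StoppingFamily

variable {F : Type*} [NormedAddCommGroup F] {f : (Fin d → ℝ) → F} {Q₀ S T : DyadicCube d}

theorem pairwiseDisjoint_stopFamilyLevel (f : (Fin d → ℝ) → F) (Q₀ : DyadicCube d) :
    ∀ n, (stopFamilyLevel f Q₀ n).PairwiseDisjoint DyadicCube.set
  | 0 => Set.pairwiseDisjoint_singleton _ _
  | n + 1 => ((pairwiseDisjoint_stopFamilyLevel f Q₀ n).mono_on fun S _ =>
      biUnion_stopChildren_subset f S).biUnion fun S _ => pairwiseDisjoint_stopChildren f S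

theorem exists_superset_mem_stopFamilyLevel {n : ℕ} :
    ∀ {j : ℕ} {T : DyadicCube d}, T ∈ stopFamilyLevel f Q₀ (n + j) →
      ∃ R ∈ stopFamilyLevel f Q₀ n, T.set ⊆ R.set
  | 0, T, hT => ⟨T, hT, subset_rfl⟩
  | j + 1, T, hT => by
    obtain ⟨P, hP, hTP⟩ := Set.mem_iUnion₂.1 hT
    obtain ⟨R, hR, hPR⟩ := exists_superset_mem_stopFamilyLevel (j := j) hP
    exact ⟨R, hR, hTP.1.subset.trans hPR⟩

theorem exists_stopChildren_superset_of_mem_stopFamily (hS : S ∈ stopFamily f Q₀)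
    (hT : T ∈ stopFamily f Q₀) (hTS : T.set ⊂ S.set) :
    ∃ R ∈ stopChildren f S, T.set ⊆ R.set := by
  obtain ⟨n, hS⟩ := Set.mem_iUnion.1 hS
  obtain ⟨m, hT⟩ := Set.mem_iUnion.1 hT
  obtain ⟨x, hx⟩ := T.nonempty_set
  rcases le_or_gt m n with hmn | hnm
  · obtain ⟨j, rfl⟩ := Nat.exists_eq_add_of_le hmn
    obtain ⟨P, hP, hSP⟩ := exists_superset_mem_stopFamilyLevel hS
    obtain rfl := (pairwiseDisjoint_stopFamilyLevel f Q₀ m).elim_set hT hP x hx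
      (hSP (hTS.subset hx))
    exact absurd hSP hTS.not_subset
  · obtain ⟨j, rfl⟩ := Nat.exists_eq_add_of_le (Nat.succ_le_of_lt hnm)
    obtain ⟨R, hR, hTR⟩ := exists_superset_mem_stopFamilyLevel hT
    obtain ⟨P, hP, hRP⟩ := Set.mem_iUnion₂.1 hR
    obtain rfl := (pairwiseDisjoint_stopFamilyLevel f Q₀ n).elim_set hP hS x
      (hRP.1.subset (hTR hx)) (hTS.subset hx)
    exact ⟨R, hRP, hTR⟩

theorem stopChildren_subset_stopFamily (hS : S ∈ stopFamily f Q₀) :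
    stopChildren f S ⊆ stopFamily f Q₀ := by
  obtain ⟨n, hn⟩ := Set.mem_iUnion.1 hS
  exact fun S' hS' => Set.mem_iUnion.2 ⟨n + 1, Set.mem_iUnion₂.2 ⟨S, hn, hS'⟩⟩

theorem sdiff_stopChildren_subset_ESet (hS : S ∈ stopFamily f Q₀) :
    S.set \ ⋃ S' ∈ stopChildren f S, DyadicCube.set S' ⊆ ESet (stopFamily f Q₀) S := by
  refine Set.sdiff_subset_sdiff_right (Set.iUnion₂_subset fun T hT => ?_)
  obtain ⟨R, hR, hTR⟩ := exists_stopChildren_superset_of_mem_stopFamily hS hT.1 hT.2.1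
  exact hTR.trans (Set.subset_biUnion_of_mem (u := DyadicCube.set) hR)

theorem isSparse_stopFamily (f : (Fin d → ℝ) → F) (Q₀ : DyadicCube d) :
    IsSparse volume (stopFamily f Q₀) := fun S hS =>
  calc volume S.set ≤ 2 * volume (S.set \ ⋃ S' ∈ stopChildren f S, DyadicCube.set S') :=
        measure_le_two_mul_measure_sdiff S.volume_set_ne_top <|
          (measure_biUnion_le volume (Set.to_countable _) _).trans (tsum_volume_stopChildren_le f S)
    _ ≤ 2 * volume (ESet (stopFamily f Q₀) S) := by
        gcongr
        exact sdiff_stopChildren_subset_ESet hS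

theorem not_subset_stopChildren_of_isStopParent {Q : DyadicCube d}
    (hQ : isStopParent (stopFamily f Q₀) Q S) :
    ∀ S' ∈ stopChildren f S, ¬Q.set ⊆ S'.set := fun S' hS' hQS' =>
  hS'.1.not_subset (hQ.2.2 S' (stopChildren_subset_stopFamily hQ.1 hS') hQS')

end StoppingFamily

/-- The function `f_S`: it is `f` on `S` away from the stopping children of `S`, the average of `f`
on each of those, and `0` off `S`. -/
def stopFun (f : (Fin d → ℝ) → E) (S : DyadicCube d) (x : Fin d → ℝ) : E :=
  (S.set \ ⋃ S' ∈ stopChildren f S, DyadicCube.set S').indicator f x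
    + ∑' S' : stopChildren f S, (S'.1).set.indicator (fun _ => cubeAvg volume f S'.1) x

section StoppedFunction

variable {F : Type*} [NormedAddCommGroup F] [NormedSpace ℝ F]

theorem stopFun_of_mem_stopChildren {f : (Fin d → ℝ) → F} {S S' : DyadicCube d} {x : Fin d → ℝ}
    (hS' : S' ∈ stopChildren f S) (hx : x ∈ S'.set) : stopFun f S x = cubeAvg volume f S' := by
  rw [stopFun, Set.indicator_of_notMem fun h => h.2 (Set.mem_biUnion hS' hx), zero_add,
    tsum_eq_single ⟨S', hS'⟩, Set.indicator_of_mem hx]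
  refine fun T hT => Set.indicator_of_notMem (fun hxT => hT (Subtype.ext ?_)) _
  exact (pairwiseDisjoint_stopChildren f S).elim_set T.2 hS' x hxT hx

theorem stopFun_of_notMem_stopChildren {f : (Fin d → ℝ) → F} {S : DyadicCube d} {x : Fin d → ℝ}
    (hx : x ∉ ⋃ S' ∈ stopChildren f S, DyadicCube.set S') :
    stopFun f S x = S.set.indicator f x := by
  have hzero (S' : stopChildren f S) : S'.1.set.indicator (fun _ => cubeAvg volume f S'.1) x = 0 :=
    Set.indicator_of_notMem (fun h => hx (Set.mem_biUnion S'.2 h)) _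
  simp only [stopFun, hzero, tsum_zero, add_zero]
  rw [Set.sdiff_eq, Set.inter_comm, ← Set.indicator_indicator, Set.indicator_of_mem hx]

theorem eqOn_stopFun_setAverage_inter {f : (Fin d → ℝ) → F} {Q S S' : DyadicCube d}
    (hQ : ¬Q.set ⊆ S'.set) (hS' : S' ∈ stopChildren f S) :
    Set.EqOn (stopFun f S) (fun _ => ⨍ y in Q.set ∩ S'.set, f y) (Q.set ∩ S'.set) := by
  intro x hx
  have hS'Q : S'.set ⊆ Q.set := (DyadicCube.subset_or_subset_of_mem hx.1 hx.2).resolve_left hQ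
  rw [stopFun_of_mem_stopChildren hS' hx.2, cubeAvg_eq_setAverage, Set.inter_eq_right.2 hS'Q]

theorem setIntegral_stopFun {f : (Fin d → ℝ) → E} {Q S : DyadicCube d} (hf : IntegrableOn f Q.set)
    (hQS : Q.set ⊆ S.set) (hQ : ∀ S' ∈ stopChildren f S, ¬Q.set ⊆ S'.set) :
    ∫ x in Q.set, stopFun f S x = ∫ x in Q.set, f x := by
  set U := ⋃ S' ∈ stopChildren f S, DyadicCube.set S' with hU
  have hUm : MeasurableSet U :=
    .biUnion (Set.to_countable _) fun S' _ => S'.measurableSet_set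
  have hQU : Q.set ∩ U = ⋃ S' : stopChildren f S, Q.set ∩ S'.1.set := by
    rw [hU, Set.biUnion_eq_iUnion, Set.inter_iUnion]
  have hfQU : IntegrableOn f (⋃ S' : stopChildren f S, Q.set ∩ S'.1.set) :=
    hf.mono_set (hQU ▸ Set.inter_subset_left)
  have hmeas (S' : stopChildren f S) : MeasurableSet (Q.set ∩ S'.1.set) :=
    Q.measurableSet_set.inter S'.1.measurableSet_set
  have hdisj : Pairwise (Function.onFun Disjoint fun S' : stopChildren f S => Q.set ∩ S'.1.set) :=
    fun A B hAB => (pairwiseDisjoint_stopChildren f S A.2 B.2 (Subtype.coe_ne_coe.2 hAB)).mono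
      Set.inter_subset_right Set.inter_subset_right
  have hfin (S' : stopChildren f S) : volume (Q.set ∩ S'.1.set) ≠ ∞ :=
    measure_ne_top_of_subset Set.inter_subset_left Q.volume_set_ne_top
  have havg (S' : stopChildren f S) := eqOn_stopFun_setAverage_inter (hQ S' S'.2) S'.2
  have hoff : Set.EqOn f (stopFun f S) (Q.set \ U) := fun x hx => by
    rw [stopFun_of_notMem_stopChildren hx.2, Set.indicator_of_mem (hQS hx.1)]
  have hQUm : MeasurableSet (Q.set \ U) := Q.measurableSet_set.diff hUm
  have hint : IntegrableOn (stopFun f S) Q.set := by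
    rw [← Set.inter_union_sdiff Q.set U, hQU]
    exact (integrableOn_iUnion_of_eqOn_setAverage hmeas hdisj hfin hfQU havg).union
      ((hf.mono_set Set.sdiff_subset).congr_fun hoff hQUm)
  rw [← integral_inter_add_sdiff hUm hf, ← integral_inter_add_sdiff hUm hint, hQU,
    setIntegral_iUnion_eq_of_eqOn_setAverage hmeas hdisj hfin hfQU havg,
    setIntegral_congr_fun hQUm hoff]

theorem enorm_le_of_tendsto_cubeAvg_containing {f : (Fin d → ℝ) → F} {S : DyadicCube d}
    {x : Fin d → ℝ} (hxS : x ∈ S.set) (hx : x ∉ ⋃ S' ∈ stopChildren f S, DyadicCube.set S')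
    (hlim : Tendsto (fun k => cubeAvg volume f (.containing k x)) atTop (𝓝 (f x))) :
    ‖f x‖ₑ ≤ 2 * cubeAvgN volume f S := by
  refine le_of_tendsto hlim.enorm <| (eventually_ge_atTop S.k).mono fun k hk => ?_
  refine (enorm_cubeAvg_le_cubeAvgN volume f _).trans <|
    cubeAvgN_le_of_not_subset_stopChildren (DyadicCube.containing_subset hk hxS) ?_
  exact fun S' hS' h => hx (Set.mem_biUnion hS' (h (DyadicCube.mem_containing k x)))

theorem ae_enorm_stopFun_le {f : (Fin d → ℝ) → E} {S : DyadicCube d} (hf : IntegrableOn f S.set) :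
    ∀ᵐ x, ‖stopFun f S x‖ₑ ≤ 2 * 2 ^ d * cubeAvgN volume f S := by
  filter_upwards [ae_tendsto_cubeAvg_containing_of_integrableOn hf] with x hlim
  by_cases hxU : x ∈ ⋃ S' ∈ stopChildren f S, DyadicCube.set S'
  · obtain ⟨S', hS', hxS'⟩ := Set.mem_iUnion₂.1 hxU
    rw [stopFun_of_mem_stopChildren hS' hxS']
    exact (enorm_cubeAvg_le_cubeAvgN volume f S').trans (cubeAvgN_stopChildren_le hS')
  rw [stopFun_of_notMem_stopChildren hxU]
  by_cases hxS : x ∈ S.set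
  · rw [Set.indicator_of_mem hxS]
    calc ‖f x‖ₑ ≤ 2 * cubeAvgN volume f S :=
          enorm_le_of_tendsto_cubeAvg_containing hxS hxU (hlim hxS)
      _ ≤ 2 * 2 ^ d * cubeAvgN volume f S := by
          gcongr
          exact le_mul_of_one_le_right zero_le (one_le_pow₀ one_le_two)
  · simp [hxS]

end StoppedFunction

theorem stopping_family_sparse_general (f : (Fin d → ℝ) → E) (Q₀ S : DyadicCube d)
    (hf : IntegrableOn f S.set) :
    (∑' S' : stopChildren f S, volume S'.1.set ≤ volume S.set / 2) ∧
    IsSparse volume (stopFamily f Q₀) ∧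
    (∀ Q : DyadicCube d, isStopParent (stopFamily f Q₀) Q S →
      ∫ x in Q.set, f x = ∫ x in Q.set, stopFun f S x) ∧
    ∀ᵐ x, ‖stopFun f S x‖ₑ ≤ 2 * 2 ^ d * cubeAvgN volume f S :=
  ⟨tsum_volume_stopChildren_le f S, isSparse_stopFamily f Q₀,
    fun _ hQ => (setIntegral_stopFun (hf.mono_set hQ.2.1) hQ.2.1
      (not_subset_stopChildren_of_isStopParent hQ)).symm,
    ae_enorm_stopFun_le hf⟩

/-- The stopping-time construction produces a sparse family with `L^∞` control:
(1) `∑_{S'∈ch(S)} |S'| ≤ |S|/2` and the family is sparse;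
(2) `∫_Q f = ∫_Q f_S` whenever `π_𝒮(Q) = S`;
(3) `‖f_S‖_∞ ≤ 2·2^d ⟨‖f‖⟩_S`. -/
theorem stopping_family_sparse
    (f : (Fin d → ℝ) → E) (hf : LocallyIntegrable f volume)
    (Q₀ : DyadicCube d) (S : DyadicCube d) (hS : S ∈ stopFamily f Q₀) :
    (∑' S' : stopChildren f S, volume (S'.1).set ≤ volume S.set / 2) ∧
    IsSparse volume (stopFamily f Q₀) ∧
    (∀ Q : DyadicCube d, isStopParent (stopFamily f Q₀) Q S →
      ∫ x in Q.set, f x =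
      ∫ x in Q.set,
        ((S.set \ ⋃ S' ∈ stopChildren f S, DyadicCube.set S').indicator f x
          + ∑' S' : stopChildren f S,
              (S'.1).set.indicator (fun _ => cubeAvg volume f S'.1) x)) ∧
    (∀ᵐ x ∂(volume : Measure (Fin d → ℝ)),
      (‖(S.set \ ⋃ S' ∈ stopChildren f S, DyadicCube.set S').indicator f x
          + ∑' S' : stopChildren f S,
              (S'.1).set.indicator (fun _ => cubeAvg volume f S'.1) x‖₊ : ℝ≥0∞)
        ≤ 2 * 2 ^ d * cubeAvgN volume f S) :=
  stopping_family_sparse_general f Q₀ S (integrableOn_dyadicCube hf S)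

end
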